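/- Let k_F > 0, V̂ : ℤ³ → [0,∞), and q ∈ B_F^c. For each ℓ ∈ ℤ³∖{0} with q ∈ L_ℓ define on ℂ^{L_ℓ} the positive definite diagonal matrix h(ℓ) with entries h(ℓ)_{p,p} = λ_{ℓ,p}, the rank-one positive semidefinite matrix P(ℓ) with all entries equal to g_ℓ, and M(ℓ) := h(ℓ)^{-1/2} ( h(ℓ)^{1/2}(h(ℓ)+2P(ℓ))h(ℓ)^{1/2} )^{1/2} h(ℓ)^{-1/2}, where X^{1/2} denotes the unique positive semidefinite square root of a positive semidefinite matrix X. (M(ℓ) is positive definite and equals e^{−2K(ℓ)} for the Bogoliubov kernel K(ℓ).) Then (1/4) Σ_{ℓ∈ℤ³∖{0}} 1_{L_ℓ}(q) ( M(ℓ) + M(ℓ)^{-1} − 2·Id )_{q,q} = n^{RPA}(q); equivalently, with K(ℓ) := −(1/2)log M(ℓ), one has (1/2) Σ_{ℓ} 1_{L_ℓ}(q) (cosh(2K(ℓ)) − 1)_{q,q} = n^{RPA}(q). -/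

import Mathlib

/-!
Both sides are sums over `ℓ` with the same index set, so the identity is proved for each lens
separately; a lens is finite and its energies are positive (`lens_finite`, `lam_pos`).

Fix `ℓ`, write `λ` for the diagonal of `h`, `u = √λ`, and `S(t) = ∑ₚ λₚ (t² + λₚ²)⁻¹`. The square
root `B` satisfies `B² = diag(λ²) + 2g u uᵀ`, and `M q q = B q q / λ_q`, `N q q = λ_q (B⁻¹) q q`.
The resolvent entry `((t² + B²)⁻¹) q q` is computed in two ways:

* Sherman–Morrison (`resolvent_entry`) gives
  `(t² + λ_q²)⁻¹ - 2g λ_q (t² + λ_q²)⁻² / (1 + 2g S(t))`;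
* diagonalizing `B` gives `∑ᵢ wᵢ (t² + bᵢ²)⁻¹`, where the `bᵢ > 0` are the eigenvalues of `B`, the
  `wᵢ` are the squared moduli of the `q`-components of the eigenvectors, and `∑ᵢ wᵢ = 1`.

Comparing them turns the integrand of `nRPA` into a combination of the functions `(t² + b²)⁻¹`,
whose integral over `(0, ∞)` is `π / (2b)`. What remains is `∑ᵢ wᵢ bᵢ = B q q` and
`∑ᵢ wᵢ bᵢ⁻¹ = (B⁻¹) q q` (`integral_spectral`, `integral_formula`). The positivity of the
eigenvalues comes from the invertibility of `M`, hence of `B`. Diagonalizing the given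
positive semidefinite `B` itself makes uniqueness of the square root unnecessary.
-/


open scoped BigOperators
open MeasureTheory

noncomputable section

attribute [local instance] Classical.propDecidable

/-- The momentum lattice `ℤ³`. -/
abbrev Z3 : Type := Fin 3 → ℤ

/-- Squared Euclidean norm `|p|²` of an integer vector, as a real number. -/
def nsq (p : Z3) : ℝ := ∑ i, ((p i : ℝ)) ^ 2

/-- The Fermi ball `B_F = {k ∈ ℤ³ : |k| ≤ k_F}`. -/
def BF (kF : ℝ) : Set Z3 := {k | nsq k ≤ kF ^ 2}

/-- The lens `L_ℓ = B_F^c ∩ (B_F + ℓ)`. -/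
def lens (kF : ℝ) (ℓ : Z3) : Set Z3 := {p | p ∉ BF kF ∧ p - ℓ ∈ BF kF}

/-- The excitation energy `λ_{ℓ,p} = (|p|² − |p−ℓ|²)/2`. -/
def lam (ℓ p : Z3) : ℝ := (nsq p - nsq (p - ℓ)) / 2

/-- The energy gap `e(q) = | |q|² − min_{p ∈ B_F^c} |p|² + 1/2 |`. -/
def efun (kF : ℝ) (q : Z3) : ℝ := |nsq q - sInf (nsq '' (BF kF)ᶜ) + 1 / 2|

/-- The coupling coefficient `g_ℓ = k_F⁻¹ V̂(ℓ) / (2(2π)³)`. -/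
def gcoef (kF : ℝ) (V : Z3 → ℝ) (ℓ : Z3) : ℝ := kF⁻¹ * V ℓ / (2 * (2 * Real.pi) ^ 3)

/-- The random phase approximation contribution `n^{RPA}(q)` (Eq. `eq:nqb`). -/
def nRPA (kF : ℝ) (V : Z3 → ℝ) (q : Z3) : ℝ :=
  ∑' ℓ : Z3, if ℓ ≠ 0 ∧ q ∈ lens kF ℓ then
    (1 / Real.pi) * ∫ t in Set.Ioi (0 : ℝ),
      (gcoef kF V ℓ * (t ^ 2 - (lam ℓ q) ^ 2) * (((t ^ 2 + (lam ℓ q) ^ 2) ^ 2)⁻¹)) /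
        (1 + 2 * gcoef kF V ℓ *
          ∑' p : Z3, if p ∈ lens kF ℓ then lam ℓ p * (t ^ 2 + (lam ℓ p) ^ 2)⁻¹ else 0)
  else 0

/-- Product of two (lens-supported) matrices, realized as functions on `ℤ³ × ℤ³`. -/
def matMulC (A B : Z3 → Z3 → ℂ) : Z3 → Z3 → ℂ := fun r s => ∑' t : Z3, A r t * B t s

/-- The identity matrix of `ℓ²(L)` for a subset `L ⊆ ℤ³`. -/
def idOn (L : Set Z3) : Z3 → Z3 → ℂ := fun r t => if r = t ∧ r ∈ L then 1 else 0

/-- A matrix is supported on `L × L`. -/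
def suppOn (L : Set Z3) (A : Z3 → Z3 → ℂ) : Prop :=
  ∀ r t : Z3, (r ∉ L ∨ t ∉ L) → A r t = 0

/-- A matrix is positive semidefinite as an operator on `ℓ²(L)`. -/
def IsPSDOn (L : Set Z3) (A : Z3 → Z3 → ℂ) : Prop :=
  (∀ r t : Z3, A r t = starRingEnd ℂ (A t r)) ∧
  ∀ v : Z3 → ℂ, (∀ p : Z3, p ∉ L → v p = 0) →
    0 ≤ (∑' rt : Z3 × Z3, starRingEnd ℂ (v rt.1) * A rt.1 rt.2 * v rt.2).re

/-- The explicit diagonal matrix `h(ℓ)^{1/2}` with entries `√λ_{ℓ,p}` on the lens. -/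
def sqrtH (kF : ℝ) (ℓ : Z3) : Z3 → Z3 → ℂ :=
  fun r t => if r = t ∧ r ∈ lens kF ℓ then ((Real.sqrt (lam ℓ r) : ℝ) : ℂ) else 0

/-- The explicit diagonal matrix `h(ℓ)^{−1/2}` with entries `(√λ_{ℓ,p})⁻¹` on the lens. -/
def invSqrtH (kF : ℝ) (ℓ : Z3) : Z3 → Z3 → ℂ :=
  fun r t => if r = t ∧ r ∈ lens kF ℓ then (((Real.sqrt (lam ℓ r))⁻¹ : ℝ) : ℂ) else 0

/-- The matrix `h(ℓ) + 2P(ℓ)` on the lens, where `h(ℓ)` is diagonal with entries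
`λ_{ℓ,p}` and `P(ℓ)` has all entries equal to `g_ℓ`. -/
def hP2 (kF : ℝ) (V : Z3 → ℝ) (ℓ : Z3) : Z3 → Z3 → ℂ :=
  fun r t => if r ∈ lens kF ℓ ∧ t ∈ lens kF ℓ then
    ((if r = t then (lam ℓ r : ℂ) else 0) + 2 * ((gcoef kF V ℓ : ℝ) : ℂ)) else 0

/-! ### Scalar integrals -/

lemma integrable_inv_sq_add_sq {b : ℝ} (hb : 0 < b) :
    IntegrableOn (fun t : ℝ => (t ^ 2 + b ^ 2)⁻¹) (Set.Ioi 0) := by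
  have h := ((integrable_inv_one_add_sq.comp_mul_left' (inv_ne_zero hb.ne')).const_mul
    ((b ^ 2)⁻¹)).integrableOn (s := Set.Ioi 0)
  refine h.congr_fun (fun t _ => ?_) measurableSet_Ioi
  have : t ^ 2 + b ^ 2 ≠ 0 := by positivity
  have h' : 1 + (b⁻¹ * t) ^ 2 ≠ 0 := by positivity
  simp only
  rw [← mul_inv]
  congr 1
  field_simp
  ring

lemma integral_Ioi_inv_sq_add_sq {b : ℝ} (hb : 0 < b) :
    ∫ t in Set.Ioi (0 : ℝ), (t ^ 2 + b ^ 2)⁻¹ = Real.pi / (2 * b) := by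
  have h := integral_comp_mul_left_Ioi (fun x : ℝ => (1 + x ^ 2)⁻¹) 0 (inv_pos.mpr hb)
  rw [mul_zero, integral_Ioi_inv_one_add_sq, Real.arctan_zero, sub_zero, inv_inv,
    smul_eq_mul] at h
  have h2 : ∀ t : ℝ, (t ^ 2 + b ^ 2)⁻¹ = (b ^ 2)⁻¹ * (1 + (b⁻¹ * t) ^ 2)⁻¹ := by
    intro t
    rw [← mul_inv]
    congr 1
    field_simp
    ring
  simp_rw [h2]
  rw [integral_const_mul, h]
  field_simp

/-- The spectral form of the integral: `w` are the weights of a unit vector in an eigenbasis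
with eigenvalues `b`, and the integrand is a combination of the elementary functions
`(t² + b²)⁻¹`, since `(t² - l²)(t² + b²)⁻¹ = 1 - (b² + l²)(t² + b²)⁻¹`. -/
lemma integral_spectral {ι : Type*} [Fintype ι] (w b : ι → ℝ) (hb : ∀ i, 0 < b i)
    (hw : ∑ i, w i = 1) {l : ℝ} (hl : 0 < l) :
    1 / Real.pi * ∫ t in Set.Ioi (0 : ℝ), (t ^ 2 - l ^ 2) / (2 * l) *
        ((t ^ 2 + l ^ 2)⁻¹ - ∑ i, w i * (t ^ 2 + b i ^ 2)⁻¹)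
      = 1 / 4 * ((∑ i, w i * b i) / l + l * (∑ i, w i * (b i)⁻¹) - 2) := by
  have key : ∀ t : ℝ, (t ^ 2 - l ^ 2) / (2 * l) *
        ((t ^ 2 + l ^ 2)⁻¹ - ∑ i, w i * (t ^ 2 + b i ^ 2)⁻¹)
      = ∑ i, w i / (2 * l) * ((b i ^ 2 + l ^ 2) * (t ^ 2 + b i ^ 2)⁻¹
          - 2 * l ^ 2 * (t ^ 2 + l ^ 2)⁻¹) := by
    intro t
    have e : (t ^ 2 + l ^ 2)⁻¹ = ∑ i, w i * (t ^ 2 + l ^ 2)⁻¹ := by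
      rw [← Finset.sum_mul, hw, one_mul]
    conv_lhs => rw [e]
    rw [← Finset.sum_sub_distrib, Finset.mul_sum]
    refine Finset.sum_congr rfl fun i _ => ?_
    have := hb i
    have h1 : t ^ 2 + l ^ 2 ≠ 0 := by positivity
    have h2 : t ^ 2 + b i ^ 2 ≠ 0 := by positivity
    field_simp
    ring
  simp_rw [key]
  have hint : ∀ i, IntegrableOn (fun t : ℝ => (b i ^ 2 + l ^ 2) * (t ^ 2 + b i ^ 2)⁻¹
          - 2 * l ^ 2 * (t ^ 2 + l ^ 2)⁻¹) (Set.Ioi 0) := fun i =>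
    ((integrable_inv_sq_add_sq (hb i)).const_mul _).sub
      ((integrable_inv_sq_add_sq hl).const_mul _)
  rw [integral_finsetSum _ fun i _ => (hint i).const_mul _]
  have hI : ∀ i, ∫ t in Set.Ioi (0 : ℝ), w i / (2 * l) *
        ((b i ^ 2 + l ^ 2) * (t ^ 2 + b i ^ 2)⁻¹ - 2 * l ^ 2 * (t ^ 2 + l ^ 2)⁻¹)
      = Real.pi * (1 / 4 * (w i * b i / l + l * (w i * (b i)⁻¹) - 2 * w i)) := by
    intro i
    rw [integral_const_mul, integral_sub ((integrable_inv_sq_add_sq (hb i)).const_mul _)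
      ((integrable_inv_sq_add_sq hl).const_mul _), integral_const_mul, integral_const_mul,
      integral_Ioi_inv_sq_add_sq (hb i), integral_Ioi_inv_sq_add_sq hl]
    have := (hb i).ne'
    field_simp
    ring
  simp_rw [hI]
  rw [← Finset.mul_sum, ← Finset.mul_sum, Finset.sum_sub_distrib, Finset.sum_add_distrib,
    ← Finset.sum_div, ← Finset.mul_sum, ← Finset.mul_sum, hw]
  field_simp

/-! ### Rank-one perturbation of a diagonal matrix -/

/-- Sherman–Morrison: the diagonal entry of the resolvent of `diag(l²) + 2g u uᵀ`, `u = √l`. -/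
lemma resolvent_entry {ι : Type*} [Fintype ι] [DecidableEq ι] (l : ι → ℝ) (hl : ∀ i, 0 < l i)
    {g : ℝ} (hg : 0 ≤ g) (A R : Matrix ι ι ℂ)
    (hA : ∀ r s, A r s = (if r = s then ((l r : ℂ)) ^ 2 else 0)
      + 2 * (g : ℂ) * (√(l r) : ℝ) * (√(l s) : ℝ))
    (t : ℝ) (hR : (((t ^ 2 : ℝ) : ℂ) • (1 : Matrix ι ι ℂ) + A) * R = 1) (q : ι) :
    R q q = (((t ^ 2 + l q ^ 2)⁻¹ - 2 * g * l q * ((t ^ 2 + l q ^ 2) ^ 2)⁻¹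
      / (1 + 2 * g * ∑ p, l p * (t ^ 2 + l p ^ 2)⁻¹) : ℝ) : ℂ) := by
  set S : ℝ := ∑ p, l p * (t ^ 2 + l p ^ 2)⁻¹ with hS
  have hS0 : 0 ≤ S := Finset.sum_nonneg fun p _ => by have := hl p; positivity
  -- `y` is the row vector `uᵀ R`, restricted to the column `q`
  set y : ℂ := ∑ p, ((√(l p) : ℝ) : ℂ) * R p q with hy
  have hrow : ∀ r, ((t ^ 2 + l r ^ 2 : ℝ) : ℂ) * R r q + 2 * g * (√(l r) : ℝ) * y
      = if r = q then 1 else 0 := by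
    intro r
    have h := congrFun (congrFun hR r) q
    rw [add_mul, Matrix.smul_mul, one_mul, Matrix.add_apply, Matrix.smul_apply,
      Matrix.mul_apply, Matrix.one_apply] at h
    rw [← h]
    simp_rw [hA, add_mul, Finset.sum_add_distrib, ite_mul, zero_mul]
    rw [Finset.sum_ite_eq, hy, Finset.mul_sum]
    simp only [Finset.mem_univ, if_true, smul_eq_mul]
    push_cast
    rw [add_mul, add_assoc]
    congr 2
    exact Finset.sum_congr rfl fun p _ => by ring
  have hd : ∀ r, ((t ^ 2 + l r ^ 2 : ℝ) : ℂ) ≠ 0 := fun r => by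
    have := hl r
    exact Complex.ofReal_ne_zero.mpr (by positivity)
  have hsol : ∀ r, R r q = ((t ^ 2 + l r ^ 2 : ℝ) : ℂ)⁻¹ * ((if r = q then 1 else 0)
      - 2 * g * (√(l r) : ℝ) * y) := fun r => by
    rw [← hrow r, add_sub_cancel_right, inv_mul_cancel_left₀ (hd r)]
  have hsq : ∀ r, ((√(l r) : ℝ) : ℂ) * (√(l r) : ℝ) = (l r : ℂ) := fun r => by
    rw [← Complex.ofReal_mul, Real.mul_self_sqrt (hl r).le]
  have hyeq : y = (√(l q) : ℝ) * ((t ^ 2 + l q ^ 2 : ℝ) : ℂ)⁻¹ - 2 * g * S * y := by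
    conv_lhs => rw [hy]
    have : ∀ p, ((√(l p) : ℝ) : ℂ) * R p q
        = (if p = q then ((√(l p) : ℝ) : ℂ) * ((t ^ 2 + l p ^ 2 : ℝ) : ℂ)⁻¹ else 0)
          - 2 * g * y * ((l p * (t ^ 2 + l p ^ 2)⁻¹ : ℝ) : ℂ) := by
      intro p
      rw [hsol p, Complex.ofReal_mul, ← hsq p, Complex.ofReal_inv]
      split_ifs <;> ring
    simp_rw [this]
    rw [Finset.sum_sub_distrib, Finset.sum_ite_eq', ← Finset.mul_sum, ← Complex.ofReal_sum, ← hS]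
    simp only [Finset.mem_univ, if_true]
    ring
  have hden : ((1 + 2 * g * S : ℝ) : ℂ) ≠ 0 := Complex.ofReal_ne_zero.mpr (by positivity)
  have hyval : y = (√(l q) : ℝ) * ((t ^ 2 + l q ^ 2 : ℝ) : ℂ)⁻¹ / ((1 + 2 * g * S : ℝ) : ℂ) := by
    rw [eq_div_iff hden]
    push_cast at hyeq ⊢
    linear_combination hyeq
  rw [hsol q, hyval, if_pos rfl]
  have h1 := hd q
  have h2 := hsq q
  set a : ℂ := ((t ^ 2 + l q ^ 2 : ℝ) : ℂ) with ha
  set c : ℂ := ((1 + 2 * g * S : ℝ) : ℂ) with hc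
  rw [Complex.ofReal_sub, Complex.ofReal_div, ← hc, Complex.ofReal_mul, Complex.ofReal_inv,
    Complex.ofReal_inv, Complex.ofReal_pow, ← ha, Complex.ofReal_mul, ← h2]
  push_cast
  field_simp

/-! ### Functional calculus of a positive definite matrix -/

open scoped ComplexOrder in
/-- A positive semidefinite matrix with a right inverse is unitarily diagonalizable with
positive eigenvalues. -/
lemma exists_diagonalization {ι : Type*} [Fintype ι] [DecidableEq ι] (B X : Matrix ι ι ℂ)
    (hB : B.PosSemidef) (hX : B * X = 1) :
    ∃ (U : Matrix ι ι ℂ) (b : ι → ℝ), U * star U = 1 ∧ star U * U = 1 ∧ (∀ i, 0 < b i) ∧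
      B = U * Matrix.diagonal (fun i => (b i : ℂ)) * star U := by
  have hpd : B.PosDef := by
    refine (Matrix.PosSemidef.posDef_iff_isUnit hB).mpr ?_
    exact IsUnit.of_mul_eq_one _ hX
  refine ⟨hB.1.eigenvectorUnitary, hB.1.eigenvalues, ?_, ?_, hpd.eigenvalues_pos, ?_⟩
  · exact Unitary.coe_mul_star_self _
  · exact Unitary.coe_star_mul_self _
  · have := hB.1.spectral_theorem
    rw [Unitary.conjStarAlgAut_apply] at this
    exact this

lemma conj_diagonal_entry {ι : Type*} [Fintype ι] [DecidableEq ι] (U : Matrix ι ι ℂ)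
    (d : ι → ℝ) (q : ι) :
    (U * Matrix.diagonal (fun i => (d i : ℂ)) * star U) q q
      = ((∑ i, Complex.normSq (U q i) * d i : ℝ) : ℂ) := by
  rw [Matrix.mul_apply, Complex.ofReal_sum]
  refine Finset.sum_congr rfl fun i _ => ?_
  rw [Matrix.mul_diagonal, Matrix.star_apply, Complex.ofReal_mul, Complex.normSq_eq_conj_mul_self,
    Complex.star_def]
  ring

lemma conj_diagonal_mul {ι : Type*} [Fintype ι] [DecidableEq ι] (U : Matrix ι ι ℂ)
    (hU : star U * U = 1) (d e : ι → ℝ) :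
    (U * Matrix.diagonal (fun i => (d i : ℂ)) * star U)
        * (U * Matrix.diagonal (fun i => (e i : ℂ)) * star U)
      = U * Matrix.diagonal (fun i => ((d i * e i : ℝ) : ℂ)) * star U := by
  calc _ = U * Matrix.diagonal (fun i => (d i : ℂ)) * (star U * U)
        * Matrix.diagonal (fun i => (e i : ℂ)) * star U := by simp only [mul_assoc]
    _ = _ := by
      rw [hU, mul_one, mul_assoc U, Matrix.diagonal_mul_diagonal]
      simp only [Complex.ofReal_mul]

open scoped ComplexOrder in
/-- The identity on a single lens: `X` is the inverse of the square root `B`, so that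
`B q q / l q` and `l q * X q q` are the diagonal entries of `M` and `M⁻¹`. -/
lemma integral_formula {ι : Type*} [Fintype ι] [DecidableEq ι] (l : ι → ℝ) (hl : ∀ i, 0 < l i)
    {g : ℝ} (hg : 0 ≤ g) (B X : Matrix ι ι ℂ) (hB : B.PosSemidef) (hX : B * X = 1)
    (hsq : ∀ r s, (B * B) r s = (if r = s then ((l r : ℂ)) ^ 2 else 0)
      + 2 * (g : ℂ) * (√(l r) : ℝ) * (√(l s) : ℝ)) (q : ι) :
    (1 / 4 : ℂ) * (B q q / l q + l q * X q q - 2)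
      = ((1 / Real.pi * ∫ t in Set.Ioi (0 : ℝ),
        (g * (t ^ 2 - l q ^ 2) * ((t ^ 2 + l q ^ 2) ^ 2)⁻¹)
          / (1 + 2 * g * ∑ p, l p * (t ^ 2 + l p ^ 2)⁻¹) : ℝ) : ℂ) := by
  obtain ⟨U, b, hU, hU', hb, hBU⟩ := exists_diagonalization B X hB hX
  have hone : U * Matrix.diagonal (fun _ => ((1 : ℝ) : ℂ)) * star U = 1 := by
    simp [hU]
  have hXU : X = U * Matrix.diagonal (fun i => (((b i)⁻¹ : ℝ) : ℂ)) * star U := by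
    refine (left_inv_eq_right_inv (a := B) ?_ hX).symm
    rw [hBU, conj_diagonal_mul U hU', ← hone]
    simp only [inv_mul_cancel₀ (hb _).ne']
  have hw : ∑ i, Complex.normSq (U q i) = 1 := by
    have h := conj_diagonal_entry U (fun _ => 1) q
    rw [hone, Matrix.one_apply_eq] at h
    simpa using (Complex.ofReal_injective (by simpa using h)).symm
  have hres : ∀ t : ℝ, ∑ i, Complex.normSq (U q i) * (t ^ 2 + b i ^ 2)⁻¹
      = (t ^ 2 + l q ^ 2)⁻¹ - 2 * g * l q * ((t ^ 2 + l q ^ 2) ^ 2)⁻¹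
        / (1 + 2 * g * ∑ p, l p * (t ^ 2 + l p ^ 2)⁻¹) := by
    intro t
    apply Complex.ofReal_injective
    rw [← conj_diagonal_entry U (fun i => (t ^ 2 + b i ^ 2)⁻¹) q]
    refine resolvent_entry l hl hg (B * B) _ hsq t ?_ q
    have hlhs : ((t ^ 2 : ℝ) : ℂ) • (1 : Matrix ι ι ℂ) + B * B
        = U * Matrix.diagonal (fun i => ((t ^ 2 + b i ^ 2 : ℝ) : ℂ)) * star U := by
      have hs : ((t ^ 2 : ℝ) : ℂ) • (1 : Matrix ι ι ℂ)
          = U * Matrix.diagonal (fun _ => ((t ^ 2 : ℝ) : ℂ)) * star U := by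
        rw [← Matrix.smul_one_eq_diagonal, Matrix.mul_smul, Matrix.smul_mul, mul_one, hU]
      rw [hs, hBU, conj_diagonal_mul U hU', ← add_mul, ← mul_add, Matrix.diagonal_add]
      congr 4
      ext i
      push_cast
      ring
    rw [hlhs, conj_diagonal_mul U hU', ← hone]
    congr 3
    ext i
    have := hb i
    rw [mul_inv_cancel₀ (by positivity)]
  have hF : ∀ t : ℝ, (g * (t ^ 2 - l q ^ 2) * ((t ^ 2 + l q ^ 2) ^ 2)⁻¹)
          / (1 + 2 * g * ∑ p, l p * (t ^ 2 + l p ^ 2)⁻¹)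
      = (t ^ 2 - l q ^ 2) / (2 * l q) *
        ((t ^ 2 + l q ^ 2)⁻¹ - ∑ i, Complex.normSq (U q i) * (t ^ 2 + b i ^ 2)⁻¹) := by
    intro t
    rw [hres t, sub_sub_cancel]
    have := (hl q).ne'
    generalize 1 + 2 * g * ∑ p, l p * (t ^ 2 + l p ^ 2)⁻¹ = c
    generalize ((t ^ 2 + l q ^ 2) ^ 2)⁻¹ = a
    field_simp
  simp_rw [hF]
  rw [integral_spectral _ b hb hw (hl q)]
  conv_lhs => rw [hXU, hBU, conj_diagonal_entry, conj_diagonal_entry]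
  push_cast
  ring

/-! ### Lens-supported matrices as matrices over a finite type -/

lemma lens_finite (kF : ℝ) (ℓ : Z3) : (lens kF ℓ).Finite := by
  have hBF : (BF kF).Finite := by
    obtain ⟨n, hn⟩ := exists_nat_ge (kF ^ 2)
    refine (Set.finite_Icc (fun _ : Fin 3 => -(n : ℤ)) (fun _ => (n : ℤ))).subset ?_
    intro p hp
    have hbound : ∀ i, |p i| ≤ (n : ℤ) := by
      intro i
      have h1 : ((p i : ℝ)) ^ 2 ≤ nsq p :=
        Finset.single_le_sum (f := fun i => ((p i : ℝ)) ^ 2) (fun j _ => sq_nonneg _)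
          (Finset.mem_univ i)
      have h2 : ((p i : ℝ)) ^ 2 ≤ n := h1.trans (le_trans hp hn)
      have h3 : (p i) ^ 2 ≤ (n : ℤ) := by exact_mod_cast h2
      have h4 : |p i| ≤ |p i| ^ 2 := by
        rcases (abs_nonneg (p i)).eq_or_lt with h | h
        · rw [← h]; norm_num
        · nlinarith
      rw [sq_abs] at h4
      exact h4.trans h3
    exact ⟨fun i => (abs_le.mp (hbound i)).1, fun i => (abs_le.mp (hbound i)).2⟩
  refine (hBF.image (fun k => k + ℓ)).subset ?_
  intro p hp
  exact ⟨p - ℓ, hp.2, sub_add_cancel p ℓ⟩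

lemma lam_pos {kF : ℝ} {ℓ p : Z3} (hp : p ∈ lens kF ℓ) : 0 < lam ℓ p := by
  have h1 : kF ^ 2 < nsq p := not_le.mp hp.1
  have h2 : nsq (p - ℓ) ≤ kF ^ 2 := hp.2
  unfold lam
  linarith

lemma tsum_eq_sum_lens {E : Type*} [AddCommMonoid E] [TopologicalSpace E] [T2Space E]
    (L : Set Z3) [Fintype L] (f : Z3 → E) (hf : ∀ p, p ∉ L → f p = 0) :
    ∑' p, f p = ∑ p : L, f p := by
  rw [← tsum_fintype (L := .unconditional _), tsum_subtype]
  congr 1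
  ext p
  by_cases h : p ∈ L <;> simp [h, hf]

/-- The restriction of a function on `ℤ³ × ℤ³` to a matrix indexed by `L`. -/
def restr (L : Set Z3) (A : Z3 → Z3 → ℂ) : Matrix L L ℂ := Matrix.of fun r s => A r s

lemma restr_mul (L : Set Z3) [Fintype L] (A C : Z3 → Z3 → ℂ) (hC : suppOn L C) :
    restr L (matMulC A C) = restr L A * restr L C := by
  ext r s
  rw [Matrix.mul_apply]
  exact tsum_eq_sum_lens L (fun t => A r t * C t s) fun p hp => by
    rw [hC p s (Or.inl hp), mul_zero]

open scoped ComplexOrder in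
lemma restr_posSemidef (L : Set Z3) [Fintype L] (A : Z3 → Z3 → ℂ) (hA : IsPSDOn L A) :
    (restr L A).PosSemidef := by
  have hherm : (restr L A).IsHermitian := by
    ext r s
    exact (hA.1 r s).symm
  refine Matrix.PosSemidef.of_dotProduct_mulVec_nonneg hherm fun x => ?_
  set v : Z3 → ℂ := fun p => if h : p ∈ L then x ⟨p, h⟩ else 0 with hv
  have hv0 : ∀ p, p ∉ L → v p = 0 := fun p hp => dif_neg hp
  have hvx : ∀ p : L, v p = x p := fun p => dif_pos p.2
  have h := hA.2 v hv0
  have hsum : ∑' rt : Z3 × Z3, starRingEnd ℂ (v rt.1) * A rt.1 rt.2 * v rt.2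
      = star x ⬝ᵥ (restr L A).mulVec x := by
    rw [tsum_eq_sum (s := L.toFinset ×ˢ L.toFinset)]
    · have hL : ∀ p, p ∈ L.toFinset ↔ p ∈ L := fun p => Set.mem_toFinset
      rw [Finset.sum_product, Finset.sum_subtype _ hL]
      refine Finset.sum_congr rfl fun r _ => ?_
      rw [Finset.sum_subtype _ hL, Matrix.mulVec, dotProduct, Finset.mul_sum]
      refine Finset.sum_congr rfl fun t _ => ?_
      simp only [hvx, restr, Matrix.of_apply, Pi.star_apply, Complex.star_def, mul_assoc]
    · intro rt hrt
      rw [Finset.mem_product, Set.mem_toFinset, Set.mem_toFinset, not_and_or] at hrt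
      rcases hrt with h | h <;> simp [hv0 _ h]
  rw [hsum] at h
  rw [Complex.le_def]
  refine ⟨h, ?_⟩
  have := hherm.im_star_dotProduct_mulVec_self x
  exact this.symm

lemma matMulC_diag_left (L : Set Z3) (d : Z3 → ℂ) (A : Z3 → Z3 → ℂ) (r s : Z3) :
    matMulC (fun r t => if r = t ∧ r ∈ L then d r else 0) A r s
      = if r ∈ L then d r * A r s else 0 := by
  unfold matMulC
  rw [tsum_eq_single r fun t ht => by simp [ht.symm]]
  by_cases h : r ∈ L <;> simp [h]

lemma matMulC_diag_right (L : Set Z3) (d : Z3 → ℂ) (A : Z3 → Z3 → ℂ) (r s : Z3) :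
    matMulC A (fun r t => if r = t ∧ r ∈ L then d r else 0) r s
      = if s ∈ L then A r s * d s else 0 := by
  unfold matMulC
  rw [tsum_eq_single s fun t ht => by simp [ht]]
  by_cases h : s ∈ L <;> simp [h]

lemma sandwich_apply (L : Set Z3) (d : Z3 → ℂ) (A : Z3 → Z3 → ℂ) {r s : Z3} (hr : r ∈ L)
    (hs : s ∈ L) :
    matMulC (fun r t => if r = t ∧ r ∈ L then d r else 0)
      (matMulC A (fun r t => if r = t ∧ r ∈ L then d r else 0)) r s = d r * A r s * d s := by
  rw [matMulC_diag_left, if_pos hr, matMulC_diag_right, if_pos hs, mul_assoc]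

/-! ### The sum over momentum transfers -/

/-- Integral formula for `n^{RPA}(q)` (Lemma `lem:nqb_integralrecovery`):
`(1/4) Σ_ℓ 1_{L_ℓ}(q) (M(ℓ) + M(ℓ)⁻¹ − 2·Id)_{q,q} = n^{RPA}(q)`, where
`M(ℓ) = h(ℓ)^{−1/2} (h(ℓ)^{1/2}(h(ℓ)+2P(ℓ))h(ℓ)^{1/2})^{1/2} h(ℓ)^{−1/2} = e^{−2K(ℓ)}`.
The positive semidefinite square root `B(ℓ)` of `h^{1/2}(h+2P)h^{1/2}` is characterized
by being PSD with `B(ℓ)² = h^{1/2}(h+2P)h^{1/2}`, and the inverse `N(ℓ) = M(ℓ)⁻¹` by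
`M(ℓ)N(ℓ) = N(ℓ)M(ℓ) = Id` on `ℓ²(L_ℓ)`. -/
theorem stmt16 (kF : ℝ) (hkF : 0 < kF) (V : Z3 → ℝ) (hV : ∀ ℓ : Z3, 0 ≤ V ℓ)
    (q : Z3) (hq : q ∉ BF kF)
    (B M N : Z3 → Z3 → Z3 → ℂ)
    (hBsupp : ∀ ℓ : Z3, ℓ ≠ 0 → suppOn (lens kF ℓ) (B ℓ))
    (hBpsd : ∀ ℓ : Z3, ℓ ≠ 0 → IsPSDOn (lens kF ℓ) (B ℓ))
    (hBsq : ∀ ℓ : Z3, ℓ ≠ 0 →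
      matMulC (B ℓ) (B ℓ) = matMulC (sqrtH kF ℓ) (matMulC (hP2 kF V ℓ) (sqrtH kF ℓ)))
    (hM : ∀ ℓ : Z3, ℓ ≠ 0 →
      M ℓ = matMulC (invSqrtH kF ℓ) (matMulC (B ℓ) (invSqrtH kF ℓ)))
    (hNsupp : ∀ ℓ : Z3, ℓ ≠ 0 → suppOn (lens kF ℓ) (N ℓ))
    (hMN : ∀ ℓ : Z3, ℓ ≠ 0 → matMulC (M ℓ) (N ℓ) = idOn (lens kF ℓ))
    (hNM : ∀ ℓ : Z3, ℓ ≠ 0 → matMulC (N ℓ) (M ℓ) = idOn (lens kF ℓ)) :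
    (1 / 4 : ℂ) * (∑' ℓ : Z3, if ℓ ≠ 0 ∧ q ∈ lens kF ℓ then M ℓ q q + N ℓ q q - 2 else 0)
      = ((nRPA kF V q : ℝ) : ℂ) := by
  unfold nRPA
  rw [← tsum_mul_left, Complex.ofReal_tsum]
  refine tsum_congr fun ℓ => ?_
  by_cases hc : ℓ ≠ 0 ∧ q ∈ lens kF ℓ
  swap
  · rw [if_neg hc, if_neg hc, mul_zero, Complex.ofReal_zero]
  rw [if_pos hc, if_pos hc]
  obtain ⟨hℓ, hqL⟩ := hc
  have : Fintype (lens kF ℓ) := (lens_finite kF ℓ).fintype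
  set L := lens kF ℓ with hL
  set l : L → ℝ := fun p => lam ℓ p with hl
  have hlpos : ∀ p : L, 0 < l p := fun p => lam_pos p.2
  have hg : 0 ≤ gcoef kF V ℓ := by
    have := hV ℓ
    have := Real.pi_pos
    unfold gcoef
    positivity
  have hu : ∀ p : L, ((√(l p) : ℝ) : ℂ) ≠ 0 := fun p =>
    Complex.ofReal_ne_zero.mpr (Real.sqrt_pos.mpr (hlpos p)).ne'
  have husq : ∀ p : L, ((√(l p) : ℝ) : ℂ) * (√(l p) : ℝ) = (l p : ℂ) := fun p => by
    rw [← Complex.ofReal_mul, Real.mul_self_sqrt (hlpos p).le]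
  have hMe : ∀ r s : L, M ℓ r s = ((√(l r) : ℝ) : ℂ)⁻¹ * B ℓ r s * ((√(l s) : ℝ) : ℂ)⁻¹ := by
    intro r s
    rw [hM ℓ hℓ]
    refine (sandwich_apply L (fun p => (((√(lam ℓ p))⁻¹ : ℝ) : ℂ)) (B ℓ) r.2 s.2).trans ?_
    simp only [Complex.ofReal_inv, hl]
  have hMNr : restr L (M ℓ) * restr L (N ℓ) = 1 := by
    rw [← restr_mul L _ _ (hNsupp ℓ hℓ), hMN ℓ hℓ]
    ext r s
    simp [restr, idOn, Matrix.one_apply, Subtype.ext_iff]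
  -- the inverse of `B` is `h^{-1/2} N h^{-1/2}`
  set X : Matrix L L ℂ :=
    Matrix.of fun r s => ((√(l r) : ℝ) : ℂ)⁻¹ * N ℓ r s * ((√(l s) : ℝ) : ℂ)⁻¹ with hXdef
  have hX : restr L (B ℓ) * X = 1 := by
    ext r s
    have h := congrFun (congrFun hMNr r) s
    rw [Matrix.mul_apply] at h ⊢
    have e : ∀ t : L, restr L (B ℓ) r t * X t s
        = ((√(l r) : ℝ) : ℂ) * (restr L (M ℓ) r t * restr L (N ℓ) t s)
          * ((√(l s) : ℝ) : ℂ)⁻¹ := by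
      intro t
      have h1 := hu r
      simp only [restr, hXdef, Matrix.of_apply, hMe]
      field_simp
    simp_rw [e]
    rw [← Finset.sum_mul, ← Finset.mul_sum, h]
    by_cases hrs : r = s
    · subst hrs
      rw [Matrix.one_apply_eq, mul_one, mul_inv_cancel₀ (hu r)]
    · rw [Matrix.one_apply_ne hrs, mul_zero, zero_mul]
  have hsq : ∀ r s : L, (restr L (B ℓ) * restr L (B ℓ)) r s
      = (if r = s then ((l r : ℂ)) ^ 2 else 0)
        + 2 * ((gcoef kF V ℓ : ℝ) : ℂ) * (√(l r) : ℝ) * (√(l s) : ℝ) := by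
    intro r s
    rw [← restr_mul L _ _ (hBsupp ℓ hℓ), hBsq ℓ hℓ]
    refine (sandwich_apply L (fun p => ((√(lam ℓ p) : ℝ) : ℂ)) (hP2 kF V ℓ) r.2 s.2).trans ?_
    unfold hP2
    rw [if_pos ⟨r.2, s.2⟩]
    by_cases hrs : r = s
    · subst hrs
      have := husq r
      simp only [if_true, hl] at this ⊢
      linear_combination (lam ℓ r : ℂ) * this
    · have hrs' : (r : Z3) ≠ s := fun h => hrs (Subtype.ext h)
      rw [if_neg hrs, if_neg hrs']
      simp only [hl]
      ring
  have key := integral_formula l hlpos hg (restr L (B ℓ)) X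
    (restr_posSemidef L _ (hBpsd ℓ hℓ)) hX hsq ⟨q, hqL⟩
  have htsum : ∀ t : ℝ, (∑' p : Z3, if p ∈ L then lam ℓ p * (t ^ 2 + (lam ℓ p) ^ 2)⁻¹ else 0)
      = ∑ p : L, l p * (t ^ 2 + l p ^ 2)⁻¹ := by
    intro t
    rw [tsum_eq_sum_lens L _ fun p hp => if_neg hp]
    exact Finset.sum_congr rfl fun p _ => if_pos p.2
  simp_rw [htsum]
  refine Eq.trans ?_ key
  congr 2
  have h1 := hu ⟨q, hqL⟩
  have h2 := husq ⟨q, hqL⟩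
  have h3 := hMe ⟨q, hqL⟩ ⟨q, hqL⟩
  rw [h3, ← h2]
  simp only [restr, hXdef, Matrix.of_apply]
  field_simp
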